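/- Fix β > 0, B > 0 and d ∈ ℕ. Then there exists a constant C > 0, depending only on β, B and d, with the following property: for every n ≥ 1 and every pair of symmetric matrices W, W̃ ∈ ℝ^{n×n} with zero diagonal such that (i) |W_{ij}| ≤ B for all i,j, (ii) each row of W has at most d nonzero entries, and (iii) |W̃_{ij} − W_{ij}| ≤ ε·|W_{ij}| for all i,j, for some ε with 0 < ε ≤ 1, the smallest eigenvalues of the Bethe–Hessians satisfy |λ_min(H(β; W̃)) − λ_min(H(β; W))| ≤ C·ε·√N, where N = #{(i,j) : W_{ij} ≠ 0}. In particular, if λ_min(H(β; W)) = 0 (the Nishimori condition at β), then |λ_min(H(β; W̃))| ≤ C·ε·√N. -/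

import Mathlib

open Matrix Real

/-- Diagonal part `D̃(β)` of the Bethe–Hessian: `D̃(β)_{ii} = Σ_j sinh²(β W_{ij})`. -/
noncomputable def betheDTilde {n : ℕ} (W : Matrix (Fin n) (Fin n) ℝ) (β : ℝ) :
    Matrix (Fin n) (Fin n) ℝ :=
  Matrix.diagonal (fun i => ∑ j, Real.sinh (β * W i j) ^ 2)

/-- Off-diagonal part `S(β)` of the Bethe–Hessian: `S(β)_{ij} = sinh(β W_{ij}) cosh(β W_{ij})`. -/
noncomputable def betheS {n : ℕ} (W : Matrix (Fin n) (Fin n) ℝ) (β : ℝ) :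
    Matrix (Fin n) (Fin n) ℝ :=
  Matrix.of fun i j => Real.sinh (β * W i j) * Real.cosh (β * W i j)

/-- The Bethe–Hessian `H(β) = I + D̃(β) − S(β)`. -/
noncomputable def betheH {n : ℕ} (W : Matrix (Fin n) (Fin n) ℝ) (β : ℝ) :
    Matrix (Fin n) (Fin n) ℝ :=
  1 + betheDTilde W β - betheS W β

/-- Frobenius norm of a real matrix. -/
noncomputable def frobNorm {n : ℕ} (A : Matrix (Fin n) (Fin n) ℝ) : ℝ :=
  Real.sqrt (∑ i, ∑ j, (A i j) ^ 2)

/-- Smallest eigenvalue of a real matrix: infimum of the set of (real) eigenvalues. -/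
noncomputable def lambdaMin {n : ℕ} (A : Matrix (Fin n) (Fin n) ℝ) : ℝ :=
  sInf {r : ℝ | ∃ v : Fin n → ℝ, v ≠ 0 ∧ A.mulVec v = r • v}

/-- Diagonal matrix `P(β)` with entries `(1 + D̃(β)_{ii})^{1/2}`. -/
noncomputable def betheP {n : ℕ} (W : Matrix (Fin n) (Fin n) ℝ) (β : ℝ) :
    Matrix (Fin n) (Fin n) ℝ :=
  Matrix.diagonal (fun i => Real.sqrt (1 + ∑ j, Real.sinh (β * W i j) ^ 2))

/-- The Bethe–Hessian Laplacian `L_BH(β) = I − P(β)⁻¹ S(β) P(β)⁻¹`. -/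
noncomputable def betheLBH {n : ℕ} (W : Matrix (Fin n) (Fin n) ℝ) (β : ℝ) :
    Matrix (Fin n) (Fin n) ℝ :=
  1 - (betheP W β)⁻¹ * betheS W β * (betheP W β)⁻¹

/-!
By the double-angle formulas the entries of `D̃` and `S` are, up to constants, sums of `cosh
(2βW_{ij})` and `sinh (2βW_{ij})`, so on bounded weights `W ↦ H(β; W)` is Lipschitz for the maximal
absolute row sum `‖·‖`. That norm bounds every eigenvalue, so Weyl's inequality makes `λ_min`
1-Lipschitz for it on symmetric matrices. Relative noise of size `ε` on a matrix with at most `k`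
nonzero entries of size at most `B` per row has norm at most `kεB`. Both `d` and `N` are admissible
values of `k`, and `min d N ≤ d√N` gives the bound.
-/

section Hyperbolic

variable {r x y : ℝ}

lemma abs_sinh_le_cosh (x : ℝ) : |sinh x| ≤ cosh x := by
  rw [abs_sinh, ← cosh_abs]
  exact (sinh_lt_cosh _).le

lemma abs_sinh_sub_sinh_le (hx : |x| ≤ r) (hy : |y| ≤ r) :
    |sinh x - sinh y| ≤ cosh r * |x - y| := by
  refine (convex_Icc (-r) r).norm_image_sub_le_of_norm_hasDerivWithin_le (f := sinh) (f' := cosh)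
    (fun z _ => (hasDerivAt_sinh z).hasDerivWithinAt) (fun z hz => ?_) (abs_le.1 hy) (abs_le.1 hx)
  rw [norm_of_nonneg (cosh_pos z).le]
  exact cosh_le_cosh.2 ((abs_le.2 hz).trans (le_abs_self r))

lemma abs_cosh_sub_cosh_le (hx : |x| ≤ r) (hy : |y| ≤ r) :
    |cosh x - cosh y| ≤ cosh r * |x - y| := by
  refine (convex_Icc (-r) r).norm_image_sub_le_of_norm_hasDerivWithin_le (f := cosh) (f' := sinh)
    (fun z _ => (hasDerivAt_cosh z).hasDerivWithinAt) (fun z hz => ?_) (abs_le.1 hy) (abs_le.1 hx)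
  exact (abs_sinh_le_cosh z).trans (cosh_le_cosh.2 ((abs_le.2 hz).trans (le_abs_self r)))

lemma abs_mul_le_abs_mul (c : ℝ) (hx : |x| ≤ r) : |c * x| ≤ |c| * r := by
  rw [abs_mul]
  gcongr

lemma abs_two_mul_le (hx : |x| ≤ r) : |2 * x| ≤ 2 * r := by
  simpa only [abs_two] using abs_mul_le_abs_mul 2 hx

lemma abs_sinh_sq_sub_sinh_sq_le (hx : |x| ≤ r) (hy : |y| ≤ r) :
    |sinh x ^ 2 - sinh y ^ 2| ≤ cosh (2 * r) * |x - y| := by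
  have h := abs_cosh_sub_cosh_le (abs_two_mul_le hx) (abs_two_mul_le hy)
  have hdouble : cosh (2 * x) - cosh (2 * y) = 2 * (sinh x ^ 2 - sinh y ^ 2) := by
    rw [cosh_two_mul, cosh_two_mul, cosh_sq, cosh_sq]
    ring
  rw [hdouble, ← mul_sub, abs_mul, abs_mul, abs_two] at h
  linarith

lemma abs_sinh_mul_cosh_sub_sinh_mul_cosh_le (hx : |x| ≤ r) (hy : |y| ≤ r) :
    |sinh x * cosh x - sinh y * cosh y| ≤ cosh (2 * r) * |x - y| := by
  have h := abs_sinh_sub_sinh_le (abs_two_mul_le hx) (abs_two_mul_le hy)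
  have hdouble : sinh (2 * x) - sinh (2 * y) = 2 * (sinh x * cosh x - sinh y * cosh y) := by
    rw [sinh_two_mul, sinh_two_mul]
    ring
  rw [hdouble, ← mul_sub, abs_mul, abs_mul, abs_two] at h
  linarith

end Hyperbolic

section RowSumNorm

open scoped Matrix.Norms.Operator

variable {m n α : Type*} [Fintype m] [Fintype n] [SeminormedAddCommGroup α] {A : Matrix m n α}

lemma linfty_opNorm_le_iff {K : ℝ} (hK : 0 ≤ K) : ‖A‖ ≤ K ↔ ∀ i, ∑ j, ‖A i j‖ ≤ K := by
  lift K to NNReal using hK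
  rw [linfty_opNorm_def, NNReal.coe_le_coe, Finset.sup_le_iff]
  simp only [Finset.mem_univ, true_imp_iff, ← NNReal.coe_le_coe, NNReal.coe_sum, coe_nnnorm]

lemma sum_norm_row_le_linfty_opNorm (A : Matrix m n α) (i : m) : ∑ j, ‖A i j‖ ≤ ‖A‖ :=
  (linfty_opNorm_le_iff (norm_nonneg A)).1 le_rfl i

lemma linfty_opNorm_le_mul_of_sum_norm_row_le {A' : Matrix m n α} {c : ℝ} (hc : 0 ≤ c)
    (h : ∀ i, ∑ j, ‖A i j‖ ≤ c * ∑ j, ‖A' i j‖) : ‖A‖ ≤ c * ‖A'‖ :=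
  (linfty_opNorm_le_iff (by positivity)).2 fun i =>
    (h i).trans (by gcongr; exact sum_norm_row_le_linfty_opNorm A' i)

lemma linfty_opNorm_le_of_card_row_le [DecidableEq α] {k : ℕ} {b : ℝ} (hb : 0 ≤ b)
    (hk : ∀ i, (Finset.univ.filter fun j => A i j ≠ 0).card ≤ k) (hA : ∀ i j, ‖A i j‖ ≤ b) :
    ‖A‖ ≤ k * b := by
  refine (linfty_opNorm_le_iff (by positivity)).2 fun i => ?_
  calc ∑ j, ‖A i j‖ = ∑ j with A i j ≠ 0, ‖A i j‖ :=
        (Finset.sum_filter_of_ne (p := fun j => A i j ≠ 0) fun j _ hj h0 =>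
          hj (by rw [h0, norm_zero])).symm
    _ ≤ (Finset.univ.filter fun j => A i j ≠ 0).card * b := by
      rw [← nsmul_eq_mul]
      exact Finset.sum_le_card_nsmul _ _ _ fun j _ => hA i j
    _ ≤ k * b := by gcongr; exact hk i

lemma linfty_opNorm_sub_le_of_relative {W W' : Matrix m n ℝ} {k : ℕ} {B ε : ℝ} (hB : 0 ≤ B)
    (hε : 0 ≤ ε) (hWB : ∀ i j, |W i j| ≤ B)
    (hk : ∀ i, (Finset.univ.filter fun j => W i j ≠ 0).card ≤ k)
    (hrel : ∀ i j, |W' i j - W i j| ≤ ε * |W i j|) : ‖W' - W‖ ≤ k * (ε * B) := by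
  refine linfty_opNorm_le_of_card_row_le (by positivity) (fun i => ?_) fun i j =>
    (hrel i j).trans (by gcongr; exact hWB i j)
  refine (Finset.card_le_card (Finset.monotone_filter_right _ fun j _ hj hW => hj ?_)).trans (hk i)
  simpa [hW] using hrel i j

end RowSumNorm

section LambdaMin

open scoped Matrix.Norms.Operator MatrixOrder

variable {n : ℕ} {A A' : Matrix (Fin n) (Fin n) ℝ}

lemma lambdaMin_eq_sInf_spectrum (A : Matrix (Fin n) (Fin n) ℝ) :
    lambdaMin A = sInf (spectrum ℝ A) := by
  rw [lambdaMin, ← spectrum_toLin']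
  congr 1
  ext r
  rw [← Module.End.hasEigenvalue_iff_mem_spectrum, Module.End.hasEigenvalue_iff,
    Submodule.ne_bot_iff]
  simp only [Module.End.mem_eigenspace_iff, toLin'_apply, Set.mem_ofPred_eq, and_comm]

lemma algebraMap_le_iff_le_lambdaMin [NeZero n] (hA : A.IsHermitian) {c : ℝ} :
    algebraMap ℝ _ c ≤ A ↔ c ≤ lambdaMin A := by
  have hne : (spectrum ℝ A).Nonempty := ⟨_, hA.eigenvalues_mem_spectrum_real 0⟩
  rw [algebraMap_le_iff_le_spectrum hA.isSelfAdjoint, lambdaMin_eq_sInf_spectrum,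
    le_csInf_iff A.finite_spectrum.bddBelow hne]

lemma le_algebraMap_linfty_opNorm [NeZero n] (hA : A.IsHermitian) : A ≤ algebraMap ℝ _ ‖A‖ :=
  (le_algebraMap_iff_spectrum_le hA.isSelfAdjoint).2 fun _ hr =>
    (le_norm_self _).trans (spectrum.norm_le_norm_of_mem hr)

lemma lambdaMin_sub_lambdaMin_le [NeZero n] (hA : A.IsHermitian) (hA' : A'.IsHermitian) :
    lambdaMin A - lambdaMin A' ≤ ‖A - A'‖ := by
  rw [sub_le_iff_le_add', ← sub_le_iff_le_add, ← algebraMap_le_iff_le_lambdaMin hA', map_sub]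
  calc algebraMap ℝ _ (lambdaMin A) - algebraMap ℝ _ ‖A - A'‖ ≤ A - (A - A') :=
        sub_le_sub ((algebraMap_le_iff_le_lambdaMin hA).2 le_rfl)
          (le_algebraMap_linfty_opNorm (hA.sub hA'))
    _ = A' := sub_sub_cancel A A'

lemma abs_lambdaMin_sub_lambdaMin_le [NeZero n] (hA : A.IsHermitian) (hA' : A'.IsHermitian) :
    |lambdaMin A - lambdaMin A'| ≤ ‖A - A'‖ := by
  refine abs_sub_le_iff.2 ⟨lambdaMin_sub_lambdaMin_le hA hA', ?_⟩
  rw [norm_sub_rev]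
  exact lambdaMin_sub_lambdaMin_le hA' hA

end LambdaMin

section BetheHessian

open scoped Matrix.Norms.Operator

variable {n : ℕ} {W W' : Matrix (Fin n) (Fin n) ℝ} {β R : ℝ}

lemma betheH_isHermitian (hW : W.IsSymm) (β : ℝ) : (betheH W β).IsHermitian := by
  have hS : (betheS W β).IsHermitian := by
    ext i j
    simp [betheS, hW.apply i j]
  exact (isHermitian_one.add (isHermitian_diagonal _)).sub hS

lemma norm_betheS_sub_betheS_le (hW : ∀ i j, |W i j| ≤ R) (hW' : ∀ i j, |W' i j| ≤ R) :
    ‖betheS W β - betheS W' β‖ ≤ cosh (2 * (|β| * R)) * |β| * ‖W - W'‖ := by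
  refine linfty_opNorm_le_mul_of_sum_norm_row_le (by positivity) fun i => ?_
  rw [Finset.mul_sum]
  refine Finset.sum_le_sum fun j _ => ?_
  have h := abs_sinh_mul_cosh_sub_sinh_mul_cosh_le (abs_mul_le_abs_mul β (hW i j))
    (abs_mul_le_abs_mul β (hW' i j))
  rwa [← mul_sub, abs_mul, ← mul_assoc] at h

lemma norm_betheDTilde_sub_betheDTilde_le (hW : ∀ i j, |W i j| ≤ R) (hW' : ∀ i j, |W' i j| ≤ R) :
    ‖betheDTilde W β - betheDTilde W' β‖ ≤ cosh (2 * (|β| * R)) * |β| * ‖W - W'‖ := by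
  rw [betheDTilde, betheDTilde, diagonal_sub, linfty_opNorm_diagonal]
  refine (pi_norm_le_iff_of_nonneg (by positivity)).2 fun i => ?_
  have hentry (j : Fin n) : |sinh (β * W i j) ^ 2 - sinh (β * W' i j) ^ 2| ≤
      cosh (2 * (|β| * R)) * |β| * ‖(W - W') i j‖ := by
    have h := abs_sinh_sq_sub_sinh_sq_le (abs_mul_le_abs_mul β (hW i j))
      (abs_mul_le_abs_mul β (hW' i j))
    rwa [← mul_sub, abs_mul, ← mul_assoc] at h
  calc ‖∑ j, sinh (β * W i j) ^ 2 - ∑ j, sinh (β * W' i j) ^ 2‖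
      ≤ ∑ j, cosh (2 * (|β| * R)) * |β| * ‖(W - W') i j‖ := by
        rw [← Finset.sum_sub_distrib]
        exact norm_sum_le_of_le _ fun j _ => hentry j
    _ ≤ cosh (2 * (|β| * R)) * |β| * ‖W - W'‖ := by
        rw [← Finset.mul_sum]
        gcongr
        exact sum_norm_row_le_linfty_opNorm (W - W') i

lemma norm_betheH_sub_betheH_le (hW : ∀ i j, |W i j| ≤ R) (hW' : ∀ i j, |W' i j| ≤ R) :
    ‖betheH W β - betheH W' β‖ ≤ 2 * cosh (2 * (|β| * R)) * |β| * ‖W - W'‖ := by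
  have hsplit : betheH W β - betheH W' β =
      (betheDTilde W β - betheDTilde W' β) - (betheS W β - betheS W' β) := by
    unfold betheH
    abel
  rw [hsplit]
  refine (norm_sub_le _ _).trans ?_
  linarith [norm_betheS_sub_betheS_le (β := β) hW hW',
    norm_betheDTilde_sub_betheDTilde_le (β := β) hW hW']

lemma abs_lambdaMin_betheH_sub_lambdaMin_betheH_le [NeZero n] (hW : W.IsSymm) (hW' : W'.IsSymm)
    (hWR : ∀ i j, |W i j| ≤ R) (hWR' : ∀ i j, |W' i j| ≤ R) :
    |lambdaMin (betheH W β) - lambdaMin (betheH W' β)| ≤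
      2 * cosh (2 * (|β| * R)) * |β| * ‖W - W'‖ :=
  (abs_lambdaMin_sub_lambdaMin_le (betheH_isHermitian hW β) (betheH_isHermitian hW' β)).trans
    (norm_betheH_sub_betheH_le hWR hWR')

lemma abs_lambdaMin_betheH_sub_le_of_relative [NeZero n] {k : ℕ} {B ε : ℝ} (hW : W.IsSymm)
    (hW' : W'.IsSymm) (hWB : ∀ i j, |W i j| ≤ B)
    (hk : ∀ i, (Finset.univ.filter fun j => W i j ≠ 0).card ≤ k) (hε : 0 ≤ ε) (hε1 : ε ≤ 1)
    (hrel : ∀ i j, |W' i j - W i j| ≤ ε * |W i j|) :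
    |lambdaMin (betheH W' β) - lambdaMin (betheH W β)| ≤
      2 * cosh (2 * (|β| * (2 * B))) * |β| * (k * (ε * B)) := by
  have hB : 0 ≤ B := (abs_nonneg _).trans (hWB 0 0)
  have hWB' (i j : Fin n) : |W' i j| ≤ 2 * B := by
    linarith [abs_sub_abs_le_abs_sub (W' i j) (W i j), hrel i j, hWB i j,
      mul_le_of_le_one_left (abs_nonneg (W i j)) hε1]
  refine (abs_lambdaMin_betheH_sub_lambdaMin_betheH_le hW' hW hWB' fun i j => ?_).trans ?_
  · linarith [hWB i j]
  · gcongr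
    exact linfty_opNorm_sub_le_of_relative hB hε hWB hk hrel

end BetheHessian

lemma card_filter_row_le_card_filter {m n : Type*} [Fintype m] [Fintype n] (p : m × n → Prop)
    [DecidablePred p] (i : m) :
    (Finset.univ.filter fun j => p (i, j)).card ≤ (Finset.univ.filter p).card :=
  Finset.card_le_card_of_injOn (Prod.mk i) (by simp [Set.MapsTo])
    (Prod.mk_right_injective i).injOn

lemma natCast_min_le_mul_min_one_sqrt (d N : ℕ) : ((min d N : ℕ) : ℝ) ≤ d * min 1 √N := by
  rcases N.eq_zero_or_pos with rfl | hN
  · simp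
  · rw [min_eq_left (one_le_sqrt.2 (Nat.one_le_cast.2 hN)), mul_one]
    exact Nat.cast_le.2 (min_le_left d N)

/-- The factor `min 1 √N` is `0` for the zero matrix and `1` otherwise. -/
theorem lambdaMin_betheH_perturbation_general (β B : ℝ) (d : ℕ) :
    ∃ C > (0 : ℝ), ∀ (n : ℕ) [NeZero n] (W Wt : Matrix (Fin n) (Fin n) ℝ),
      W.IsSymm → Wt.IsSymm → (∀ i j, |W i j| ≤ B) →
      (∀ i, (Finset.univ.filter (fun j => W i j ≠ 0)).card ≤ d) →
      ∀ ε : ℝ, 0 ≤ ε → ε ≤ 1 → (∀ i j, |Wt i j - W i j| ≤ ε * |W i j|) →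
        |lambdaMin (betheH Wt β) - lambdaMin (betheH W β)| ≤
          C * ε * min 1 √(Finset.univ.filter (fun p : Fin n × Fin n => W p.1 p.2 ≠ 0)).card := by
  set L : ℝ := 2 * cosh (2 * (|β| * (2 * |B|))) * |β| * |B|
  refine ⟨L * d + 1, by positivity, fun n _ W Wt hW hWt hWB hd ε hε hε1 hrel => ?_⟩
  set N := (Finset.univ.filter (fun p : Fin n × Fin n => W p.1 p.2 ≠ 0)).card
  calc |lambdaMin (betheH Wt β) - lambdaMin (betheH W β)|
      ≤ 2 * cosh (2 * (|β| * (2 * |B|))) * |β| * ((min d N : ℕ) * (ε * |B|)) :=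
        abs_lambdaMin_betheH_sub_le_of_relative hW hWt
          (fun i j => (hWB i j).trans (le_abs_self B))
          (fun i => le_min (hd i) (card_filter_row_le_card_filter (fun p => W p.1 p.2 ≠ 0) i))
          hε hε1 hrel
    _ = L * ε * (min d N : ℕ) := by ring
    _ ≤ L * ε * (d * min 1 √N) := by gcongr; exact natCast_min_le_mul_min_one_sqrt d N
    _ = L * d * ε * min 1 √N := by ring
    _ ≤ (L * d + 1) * ε * min 1 √N := by gcongr; linarith

/-- Stability of the smallest eigenvalue of the Bethe-Hessian under
edgewise-relative weight noise, with the Nishimori case as a consequence. -/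
theorem lambdaMin_betheH_perturbation (β B : ℝ) (hβ : 0 < β) (hB : 0 < B) (d : ℕ) :
    ∃ C > (0 : ℝ), ∀ (n : ℕ), 1 ≤ n →
      ∀ (W Wt : Matrix (Fin n) (Fin n) ℝ),
        W.IsSymm → (∀ i, W i i = 0) → Wt.IsSymm → (∀ i, Wt i i = 0) →
        (∀ i j, |W i j| ≤ B) →
        (∀ i, (Finset.univ.filter (fun j => W i j ≠ 0)).card ≤ d) →
        ∀ ε : ℝ, 0 < ε → ε ≤ 1 →
          (∀ i j, |Wt i j - W i j| ≤ ε * |W i j|) →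
          (|lambdaMin (betheH Wt β) - lambdaMin (betheH W β)|
              ≤ C * ε * Real.sqrt
                  ((Finset.univ.filter
                    (fun p : Fin n × Fin n => W p.1 p.2 ≠ 0)).card)) ∧
          (lambdaMin (betheH W β) = 0 →
            |lambdaMin (betheH Wt β)|
              ≤ C * ε * Real.sqrt
                  ((Finset.univ.filter
                    (fun p : Fin n × Fin n => W p.1 p.2 ≠ 0)).card)) := by
  obtain ⟨C, hC, hgeneral⟩ := lambdaMin_betheH_perturbation_general β B d
  refine ⟨C, hC, fun n hn W Wt hW _ hWt _ hWB hd ε hε hε1 hrel => ?_⟩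
  have : NeZero n := ⟨Nat.one_le_iff_ne_zero.1 hn⟩
  have hbound := (hgeneral n W Wt hW hWt hWB hd ε hε.le hε1 hrel).trans
    (mul_le_mul_of_nonneg_left (min_le_right _ _) (by positivity))
  exact ⟨hbound, fun h0 => by rwa [h0, sub_zero] at hbound⟩
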